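/- Let (R, m) be a Noetherian local ring, I an m-primary ideal, and M a finitely generated R-module of Krull dimension t = 1. If P and Q are polynomials with rational coefficients such that ℓ_R(M/I^{n+1}M) = P(n) (with P of degree 1) and ℓ_R((I^{n+1}M :_M m)/I^{n+1}M) = Q(n) (with Q constant) for all sufficiently large n, then the constant value of Q is at most the leading coefficient of P plus ℓ_R(0 :_M m); that is, f⁰_I(M) ≤ e⁰_I(M) + ℓ_R(0 :_M m). -/

import Mathlib

open IsLocalRing Submodule

/-- The colon submodule `(N :_M J) = {x ∈ M ∣ J x ⊆ N}`. -/
def Submodule.colonBy {R M : Type*} [CommRing R] [AddCommGroup M] [Module R M]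
    (N : Submodule R M) (J : Ideal R) : Submodule R M where
  carrier := {x | ∀ r ∈ J, r • x ∈ N}
  add_mem' := fun {a b} ha hb r hr => by
    rw [smul_add]; exact N.add_mem (ha r hr) (hb r hr)
  zero_mem' := fun r hr => by rw [smul_zero]; exact N.zero_mem
  smul_mem' := fun c {x} hx r hr => by
    rw [smul_comm]; exact N.smul_mem c (hx r hr)

/-- The length of a module: the height of `⊤` in its lattice of submodules. -/
noncomputable def moduleLength (R M : Type*) [Ring R] [AddCommGroup M] [Module R M] : ℕ∞ :=
  Order.height (⊤ : Submodule R M)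

/-!
Let `J` be an ideal with generators `g₁, …, gₖ`; the case of interest is `J = 𝔪`. The submodule
`(IⁿM :_M J)` is the preimage of `IⁿMᵏ` under `x ↦ (g₁ x, …, gₖ x)`, so the Artin–Rees lemma for
the image of this map gives `(Iⁿ⁺¹M :_M J) = I (IⁿM :_M J) + (0 :_M J)` for large `n`. If `I ≤ J`,
the first summand lies in `IⁿM`; hence
`ℓ((Iⁿ⁺¹M :_M J) / Iⁿ⁺¹M) ≤ ℓ(IⁿM / Iⁿ⁺¹M) + ℓ(0 :_M J)`, and the first term on the right is the
difference of two consecutive values of the Hilbert polynomial. Artin–Rees for `(0 :_M J)` also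
shows that it meets `IⁿM` trivially for large `n`, so it embeds into `M / IⁿM`.
-/

open Filter (atTop)

section Length

variable {R M : Type*} [Ring R] [AddCommGroup M] [Module R M]

variable (R M) in
theorem moduleLength_eq_length : moduleLength R M = Module.length R M :=
  (Module.length_eq_height R M).symm

theorem length_mono {N P : Submodule R M} (h : N ≤ P) : Module.length R N ≤ Module.length R P :=
  Module.length_le_of_injective (inclusion h) (inclusion_injective h)

theorem length_map_le {M' : Type*} [AddCommGroup M'] [Module R M'] (f : M →ₗ[R] M')
    (N : Submodule R M) : Module.length R (N.map f) ≤ Module.length R N :=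
  Module.length_le_of_surjective (f.submoduleMap N) (f.submoduleMap_surjective N)

theorem length_sup_le (N P : Submodule R M) :
    Module.length R ↥(N ⊔ P) ≤ Module.length R N + Module.length R P := by
  rw [← Module.length_prod, sup_eq_range]
  exact Module.length_le_of_surjective _ (LinearMap.surjective_rangeRestrict _)

theorem length_map_mkQ_add_length_quotient {A B : Submodule R M} (h : A ≤ B) :
    Module.length R (B.map A.mkQ) + Module.length R (M ⧸ B) = Module.length R (M ⧸ A) := by
  rw [← (quotientQuotientEquivQuotient A B h).length_eq]
  exact (Module.length_eq_add_of_exact (B.map A.mkQ).subtype (B.map A.mkQ).mkQ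
    (subtype_injective _) (mkQ_surjective _) (LinearMap.exact_subtype_mkQ _)).symm

theorem length_le_length_quotient_of_disjoint {N P : Submodule R M} (h : Disjoint N P) :
    Module.length R P ≤ Module.length R (M ⧸ N) := by
  refine Module.length_le_of_injective (N.mkQ.domRestrict P) ?_
  rwa [← LinearMap.ker_eq_bot, LinearMap.ker_domRestrict, ker_mkQ, ← disjoint_iff_comap_eq_bot,
    disjoint_comm]

theorem length_map_mkQ_add_length_quotient_le {A B C S : Submodule R M} (hAB : A ≤ B)
    (hC : C ≤ B ⊔ S) :
    Module.length R (C.map A.mkQ) + Module.length R (M ⧸ B) ≤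
      Module.length R (M ⧸ A) + Module.length R S := by
  have hCBS : Module.length R (C.map A.mkQ) ≤
      Module.length R (B.map A.mkQ) + Module.length R S :=
    calc Module.length R (C.map A.mkQ)
      _ ≤ Module.length R ↥(B.map A.mkQ ⊔ S.map A.mkQ) :=
        length_mono ((map_mono hC).trans_eq (map_sup B S A.mkQ))
      _ ≤ Module.length R (B.map A.mkQ) + Module.length R (S.map A.mkQ) := length_sup_le _ _
      _ ≤ Module.length R (B.map A.mkQ) + Module.length R S := by
        grw [length_map_le A.mkQ S]
  rw [← length_map_mkQ_add_length_quotient hAB, add_right_comm]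
  gcongr

end Length

section Colon

variable {R M : Type*} [CommRing R] [AddCommGroup M] [Module R M]

theorem smul_colonBy_le (N : Submodule R M) (J : Ideal R) : J • N.colonBy J ≤ N :=
  smul_le.2 fun r hr _ hx => hx r hr

theorem mem_colonBy_span_range {ι : Type*} {N : Submodule R M} {g : ι → R} {x : M} :
    x ∈ N.colonBy (Ideal.span (Set.range g)) ↔ ∀ i, g i • x ∈ N := by
  have hspan : x ∈ N.colonBy (Ideal.span (Set.range g)) ↔
      Ideal.span (Set.range g) ≤ N.comap (LinearMap.toSpanSingleton R M x) := Iff.rfl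
  rw [hspan, Ideal.span, span_le, Set.range_subset_iff]
  rfl

theorem mem_ideal_smul_top_pi_iff {ι : Type*} [Finite ι] {I : Ideal R} {x : ι → M} :
    x ∈ I • (⊤ : Submodule R (ι → M)) ↔ ∀ i, x i ∈ I • (⊤ : Submodule R M) := by
  classical
  have := Fintype.ofFinite ι
  refine ⟨fun hx i => ?_, fun hx => ?_⟩
  · exact smul_top_le_comap_smul_top I (LinearMap.proj (φ := fun _ => M) i) hx
  · rw [← Finset.univ_sum_single x]
    exact sum_mem fun i _ =>
      smul_top_le_comap_smul_top I (LinearMap.single R (fun _ => M) i) (hx i)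

theorem exists_comap_smul_top_eq_colonBy {J : Ideal R} (hJ : J.FG) :
    ∃ (k : ℕ) (φ : M →ₗ[R] Fin k → M), ∀ I : Ideal R,
      (I • ⊤ : Submodule R (Fin k → M)).comap φ = (I • ⊤ : Submodule R M).colonBy J := by
  obtain ⟨k, g, rfl⟩ := fg_iff_exists_fin_generating_family.1 hJ
  refine ⟨k, LinearMap.pi fun i => LinearMap.lsmul R M (g i), fun I => ?_⟩
  ext x
  exact mem_ideal_smul_top_pi_iff.trans mem_colonBy_span_range.symm

variable [IsNoetherianRing R] [Module.Finite R M]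

theorem eventually_pow_succ_smul_top_inf_eq (I : Ideal R) (N : Submodule R M) :
    ∀ᶠ n in atTop, I ^ (n + 1) • ⊤ ⊓ N = I • (I ^ n • ⊤ ⊓ N) := by
  obtain ⟨c, hc⟩ := (I.stableFiltration_stable ⊤).inter_right (I.trivialFiltration N)
  exact Filter.eventually_atTop.2 ⟨c, fun n hn => (hc n hn).symm⟩

variable (M) in
theorem eventually_colonBy_pow_succ_smul_top_eq (I J : Ideal R) :
    ∀ᶠ n in atTop, (I ^ (n + 1) • ⊤ : Submodule R M).colonBy J =
      I • (I ^ n • ⊤ : Submodule R M).colonBy J ⊔ (⊥ : Submodule R M).colonBy J := by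
  obtain ⟨k, φ, hφ⟩ := exists_comap_smul_top_eq_colonBy (M := M) (IsNoetherian.noetherian J)
  have hker : LinearMap.ker φ = (⊥ : Submodule R M).colonBy J := by
    simpa only [bot_smul, comap_bot] using hφ ⊥
  have hmap (K : Ideal R) : ((K • ⊤ : Submodule R M).colonBy J).map φ =
      K • ⊤ ⊓ LinearMap.range φ := by
    rw [← hφ, map_comap_eq, inf_comm]
  filter_upwards [eventually_pow_succ_smul_top_inf_eq I (LinearMap.range φ)] with n hn
  calc (I ^ (n + 1) • ⊤ : Submodule R M).colonBy J
    _ = (((I ^ (n + 1) • ⊤ : Submodule R M).colonBy J).map φ).comap φ := by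
      rw [← hφ, (gc_map_comap φ).u_l_u_eq_u]
    _ = ((I • (I ^ n • ⊤ : Submodule R M).colonBy J).map φ).comap φ := by
      rw [hmap, hn, ← hmap, map_smul'']
    _ = I • (I ^ n • ⊤ : Submodule R M).colonBy J ⊔ (⊥ : Submodule R M).colonBy J := by
      rw [comap_map_eq, hker]

variable {I J : Ideal R}

variable (M) in
theorem eventually_colonBy_pow_succ_smul_top_le (hIJ : I ≤ J) :
    ∀ᶠ n in atTop, (I ^ (n + 1) • ⊤ : Submodule R M).colonBy J ≤
      I ^ n • ⊤ ⊔ (⊥ : Submodule R M).colonBy J := by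
  filter_upwards [eventually_colonBy_pow_succ_smul_top_eq M I J] with n hn
  rw [hn]
  gcongr
  exact (smul_mono_left hIJ).trans (smul_colonBy_le _ J)

variable (M) in
theorem eventually_disjoint_pow_smul_top_colonBy_bot (hIJ : I ≤ J) :
    ∀ᶠ n in atTop, Disjoint (I ^ n • ⊤ : Submodule R M) ((⊥ : Submodule R M).colonBy J) := by
  rw [← Filter.map_add_atTop_eq_nat 1, Filter.eventually_map]
  filter_upwards [eventually_pow_succ_smul_top_inf_eq I ((⊥ : Submodule R M).colonBy J)] with n hn
  rw [disjoint_iff_inf_le, hn]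
  exact (smul_mono hIJ inf_le_right).trans (smul_colonBy_le ⊥ J)

variable (M) in
theorem eventually_length_colonBy_pow_succ_add_le (hIJ : I ≤ J) :
    ∀ᶠ n in atTop,
      Module.length R (((I ^ (n + 1) • ⊤ : Submodule R M).colonBy J).map
          (I ^ (n + 1) • ⊤ : Submodule R M).mkQ) +
        Module.length R (M ⧸ (I ^ n • ⊤ : Submodule R M)) ≤
      Module.length R (M ⧸ (I ^ (n + 1) • ⊤ : Submodule R M)) +
        Module.length R ((⊥ : Submodule R M).colonBy J) := by
  filter_upwards [eventually_colonBy_pow_succ_smul_top_le M hIJ] with n hn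
  exact length_map_mkQ_add_length_quotient_le (pow_smul_top_le I M n.le_succ) hn

end Colon

theorem eval_add_one_of_natDegree_le_one {A : Type*} [CommSemiring A] {P : Polynomial A}
    (hP : P.natDegree ≤ 1) (x : A) : P.eval (x + 1) = P.eval x + P.coeff 1 := by
  rw [Polynomial.eq_X_add_C_of_natDegree_le_one hP]
  simp only [Polynomial.eval_add, Polynomial.eval_mul, Polynomial.eval_C, Polynomial.eval_X,
    Polynomial.coeff_add, Polynomial.coeff_C_mul, Polynomial.coeff_X_one, Polynomial.coeff_C_succ]
  ring

theorem statement2_general {R M : Type*} [CommRing R] [IsNoetherianRing R]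
    [AddCommGroup M] [Module R M] [Module.Finite R M] {I J : Ideal R} (hIJ : I ≤ J)
    {P Q : Polynomial ℚ} (hPdeg : P.natDegree ≤ 1) (hQdeg : Q.natDegree = 0)
    (hP : ∀ᶠ n : ℕ in atTop, ∃ len : ℕ,
      Module.length R (M ⧸ (I ^ (n + 1) • ⊤ : Submodule R M)) = len ∧
        (len : ℚ) = P.eval (n : ℚ))
    (hQ : ∀ᶠ n : ℕ in atTop, ∃ len : ℕ,
      Module.length R (((I ^ (n + 1) • ⊤ : Submodule R M).colonBy J).map
        (I ^ (n + 1) • ⊤ : Submodule R M).mkQ) = len ∧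
        (len : ℚ) = Q.eval (n : ℚ)) :
    ∃ s : ℕ, Module.length R ((⊥ : Submodule R M).colonBy J) = s ∧
      Q.coeff 0 ≤ P.coeff 1 + s := by
  have shift {p : ℕ → Prop} (h : ∀ᶠ n in atTop, p n) : ∀ᶠ n in atTop, p (n + 1) :=
    (Filter.tendsto_add_atTop_nat 1).eventually h
  obtain ⟨n, hlength, hdisjoint, ⟨p, hp, hpn⟩, ⟨p', hp', hpn'⟩, q, hq, hqn⟩ :=
    ((shift (eventually_length_colonBy_pow_succ_add_le M hIJ)).and
      ((shift (eventually_disjoint_pow_smul_top_colonBy_bot M hIJ)).and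
        (hP.and ((shift hP).and (shift hQ))))).exists
  obtain ⟨s, hs⟩ := ENat.ne_top_iff_exists.1 <| ne_top_of_le_ne_top (ENat.natCast_ne_top p) <|
    hp ▸ length_le_length_quotient_of_disjoint hdisjoint
  have hlength' : (q : ℚ) + p ≤ p' + s := by
    rw [hq, hp, hp', ← hs] at hlength
    exact_mod_cast hlength
  rw [Nat.cast_add_one, eval_add_one_of_natDegree_le_one hPdeg, ← hpn] at hpn'
  rw [Polynomial.eq_C_of_natDegree_eq_zero hQdeg, Polynomial.eval_C] at hqn
  exact ⟨s, hs.symm, by linarith⟩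

/-- If `dim M = 1` then `f⁰_I(M) ≤ e⁰_I(M) + ℓ_R(0 :_M 𝔪)`. -/
theorem statement2 {R M : Type*} [CommRing R] [IsNoetherianRing R] [IsLocalRing R]
    [AddCommGroup M] [Module R M] [Module.Finite R M]
    (I : Ideal R) (hI : I.radical = maximalIdeal R)
    (hdim : ringKrullDim (R ⧸ Module.annihilator R M) = 1)
    (P Q : Polynomial ℚ) (hPdeg : P.natDegree = 1) (hQdeg : Q.natDegree = 0)
    (hP : ∃ N : ℕ, ∀ n ≥ N, ∃ len : ℕ,
      moduleLength R (M ⧸ (I ^ (n + 1) • ⊤ : Submodule R M)) = len ∧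
        (len : ℚ) = P.eval (n : ℚ))
    (hQ : ∃ N : ℕ, ∀ n ≥ N, ∃ len : ℕ,
      moduleLength R ↥(Submodule.map (I ^ (n + 1) • ⊤ : Submodule R M).mkQ
        ((I ^ (n + 1) • ⊤ : Submodule R M).colonBy (maximalIdeal R))) = len ∧
        (len : ℚ) = Q.eval (n : ℚ)) :
    ∃ s : ℕ, moduleLength R ↥((⊥ : Submodule R M).colonBy (maximalIdeal R)) = s ∧
      Q.coeff 0 ≤ P.leadingCoeff + s := by
  simp only [moduleLength_eq_length, ← Filter.eventually_atTop] at hP hQ ⊢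
  simpa only [Polynomial.leadingCoeff, hPdeg] using
    statement2_general (hI ▸ Ideal.le_radical) hPdeg.le hQdeg hP hQ
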